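/- arXiv:1505.02003 — 2 statements merged into one kernel-verified Lean document; each statement's English description precedes it below -/
import Mathlib

section
/- Let s ∈ ℕ and let u = (u_j)_{j≥1} be a nonincreasing sequence of positive reals. Then there exist positive constants c_{5,s} and c_{6,s}, depending on s and u but not on n, such that e(n, s, S_{s,u}) ≤ c_{5,s}·exp(−c_{6,s}·(log n)²) for all n ∈ ℕ. -/
open MeasureTheory Matrix Filter
open scoped ENNReal BigOperators Topology

noncomputable section

/-- The `b`-adic digit of `k : ℕ` at place `b^i` (i.e. the `(i+1)`-st digit). -/
def natDigit (b k i : ℕ) : ℕ := k / b ^ i % b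

/-- The `(i+1)`-st `b`-adic digit of a real number `x ∈ [0,1)`
(using the expansion in which infinitely many digits differ from `b-1`). -/
def realDigit (b : ℕ) (x : ℝ) (i : ℕ) : ℕ := (⌊x * (b : ℝ) ^ (i + 1)⌋ % (b : ℤ)).toNat

/-- The `k`-th one-dimensional `b`-adic Walsh function. -/
def wal1 (b k : ℕ) (x : ℝ) : ℂ :=
  Complex.exp (2 * Real.pi * Complex.I / (b : ℂ) *
    ((∑ i ∈ Finset.range k, natDigit b k i * realDigit b x i : ℕ) : ℂ))

/-- The `k`-th `s`-dimensional `b`-adic Walsh function. -/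
def wal (b : ℕ) {s : ℕ} (k : Fin s → ℕ) (x : Fin s → ℝ) : ℂ :=
  ∏ j, wal1 b (k j) (x j)

/-- The unit cube `[0,1)^s`. -/
def unitCube (s : ℕ) : Set (Fin s → ℝ) := Set.univ.pi fun _ => Set.Ico (0 : ℝ) 1

/-- The `k`-th Walsh coefficient of `f`. -/
def walshCoeff (b : ℕ) {s : ℕ} (f : (Fin s → ℝ) → ℝ) (k : Fin s → ℕ) : ℂ :=
  ∫ x in unitCube s, (f x : ℂ) * (starRingEnd ℂ) (wal b k x)

/-- The generalized Dick weight `μ_a(k)`, one-dimensional case. -/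
def dickWt (b : ℕ) (a : ℝ) (k : ℕ) : ℝ :=
  ∑ i ∈ Finset.range k, if natDigit b k i ≠ 0 then ((i : ℝ) + 1 + a) else 0

/-- The generalized Dick weight `μ_a(k)` for vectors. -/
def dickWtV (b : ℕ) {s : ℕ} (a : Fin s → ℝ) (k : Fin s → ℕ) : ℝ :=
  ∑ j, dickWt b (a j) (k j)

/-- The modified Dick weight `μ'_a(k)`, one-dimensional case. -/
def mdickWt (b : ℕ) (a : ℝ) (k : ℕ) : ℝ :=
  ∑ i ∈ Finset.range k, if natDigit b k i ≠ 0 then max ((i : ℝ) + 1 + a) 1 else 0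

/-- The modified Dick weight `μ'_a(k)` for vectors. -/
def mdickWtV (b : ℕ) {s : ℕ} (a : Fin s → ℝ) (k : Fin s → ℕ) : ℝ :=
  ∑ j, mdickWt b (a j) (k j)

/-- Digitwise subtraction modulo `b` of natural numbers. -/
def dsub (b k k' : ℕ) : ℕ :=
  ∑ i ∈ Finset.range (k + k' + 1), ((natDigit b k i + (b - natDigit b k' i)) % b) * b ^ i

/-- The integral of `f` over the unit cube. -/
def intBox (s : ℕ) (f : (Fin s → ℝ) → ℝ) : ℝ := ∫ x in unitCube s, f x

/-- Membership in the Walsh space `W_{s,a}`: `f` equals its (convergent) Walsh series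
and has finite norm. -/
def MemW (b : ℕ) {s : ℕ} (a : Fin s → ℝ) (f : (Fin s → ℝ) → ℝ) : Prop :=
  (∀ x ∈ unitCube s, HasSum (fun k : Fin s → ℕ => walshCoeff b f k * wal b k x) ((f x : ℂ))) ∧
  BddAbove (Set.range fun k : Fin s → ℕ => ‖walshCoeff b f k‖ * (b : ℝ) ^ dickWtV b a k)

/-- The norm of the Walsh space `W_{s,a}`. -/
def normW (b : ℕ) {s : ℕ} (a : Fin s → ℝ) (f : (Fin s → ℝ) → ℝ) : ℝ :=
  ⨆ k : Fin s → ℕ, ‖walshCoeff b f k‖ * (b : ℝ) ^ dickWtV b a k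

/-- Membership in the modified Walsh space `W'_{s,a}`. -/
def MemW' (b : ℕ) {s : ℕ} (a : Fin s → ℝ) (f : (Fin s → ℝ) → ℝ) : Prop :=
  (∀ x ∈ unitCube s, HasSum (fun k : Fin s → ℕ => walshCoeff b f k * wal b k x) ((f x : ℂ))) ∧
  BddAbove (Set.range fun k : Fin s → ℕ => ‖walshCoeff b f k‖ * (b : ℝ) ^ mdickWtV b a k)

/-- The norm of the modified Walsh space `W'_{s,a}`. -/
def normW' (b : ℕ) {s : ℕ} (a : Fin s → ℝ) (f : (Fin s → ℝ) → ℝ) : ℝ :=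
  ⨆ k : Fin s → ℕ, ‖walshCoeff b f k‖ * (b : ℝ) ^ mdickWtV b a k

/-- The worst-case error of the algorithm `A` over the unit ball of `(H, N)`. -/
def worstErr (s : ℕ) (H : Set ((Fin s → ℝ) → ℝ)) (N : ((Fin s → ℝ) → ℝ) → ℝ)
    (A : ((Fin s → ℝ) → ℝ) → ℝ) : ℝ≥0∞ :=
  ⨆ (f : (Fin s → ℝ) → ℝ) (_ : f ∈ H) (_ : N f ≤ 1), ENNReal.ofReal |intBox s f - A f|

/-- The `n`-th minimal worst-case error over all algorithms using `n` function values
at points of the unit cube. -/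
def minErr (n s : ℕ) (H : Set ((Fin s → ℝ) → ℝ)) (N : ((Fin s → ℝ) → ℝ) → ℝ) : ℝ≥0∞ :=
  ⨅ (t : Fin n → Fin s → ℝ) (_ : ∀ i, t i ∈ unitCube s) (φ : (Fin n → ℝ) → ℝ),
    worstErr s H N fun f => φ fun i => f (t i)

/-- Partial derivative in the `j`-th coordinate. -/
def pd {s : ℕ} (j : Fin s) (f : (Fin s → ℝ) → ℝ) : (Fin s → ℝ) → ℝ :=
  fun x => deriv (fun t => f (Function.update x j t)) (x j)

/-- The mixed partial derivative `f^{(α)}`. -/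
def mpd {s : ℕ} (α : Fin s → ℕ) (f : (Fin s → ℝ) → ℝ) : (Fin s → ℝ) → ℝ :=
  (List.finRange s).foldr (fun j g => (pd j)^[α j] g) f

/-- Membership in the space `S_{s,u}` of smooth functions. -/
def MemS {s : ℕ} (u : Fin s → ℝ) (f : (Fin s → ℝ) → ℝ) : Prop :=
  ContDiff ℝ (⊤ : ℕ∞) f ∧
  BddAbove (Set.range fun α : Fin s → ℕ =>
    (∫ x in unitCube s, |mpd α f x|) / ∏ j, u j ^ α j)

/-- The norm of the space `S_{s,u}`. -/
def normS {s : ℕ} (u : Fin s → ℝ) (f : (Fin s → ℝ) → ℝ) : ℝ :=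
  ⨆ α : Fin s → ℕ, (∫ x in unitCube s, |mpd α f x|) / ∏ j, u j ^ α j

/-- The column vector of the first `m` `b`-adic digits of `k`. -/
def trunc (b m k : ℕ) : Fin m → ZMod b := fun i => (natDigit b k (i : ℕ) : ZMod b)

/-- The `m`-th point of the digital net determined by generating matrices `G`. -/
def netPoint (b : ℕ) {s l d : ℕ} (G : Fin s → Matrix (Fin l) (Fin d) (ZMod b)) (m : ℕ) :
    Fin s → ℝ :=
  fun j => ∑ i : Fin l, (((G j).mulVec (trunc b d m)) i).val / (b : ℝ) ^ ((i : ℕ) + 1)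

/-- The dual net of the digital net determined by `G`. -/
def dualNet (b : ℕ) {s l d : ℕ} (G : Fin s → Matrix (Fin l) (Fin d) (ZMod b)) :
    Set (Fin s → ℕ) :=
  {k | ∑ j, (G j)ᵀ.mulVec (trunc b l (k j)) = 0}

/-- The QMC algorithm given by the digital net with generating matrices `G`. -/
def qmcNet (b : ℕ) {s l d : ℕ} (G : Fin s → Matrix (Fin l) (Fin d) (ZMod b))
    (f : (Fin s → ℝ) → ℝ) : ℝ :=
  ((b : ℝ) ^ d)⁻¹ * ∑ m ∈ Finset.range (b ^ d), f (netPoint b G m)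

/-- `n_j = #{i ∈ ℕ : i + a ≤ 1}` (with `i` ranging over positive integers). -/
def negCount (a : ℝ) : ℕ := Set.ncard {i : ℕ | 0 < i ∧ (i : ℝ) + a ≤ 1}

/-!
Two functions of the unit ball that agree at the nodes of a grid have integrals close to each other,
and this alone bounds the minimal error. Their difference `h` vanishes on the grid, and its `k`-th
partial derivatives are `O(U ^ k)` uniformly on the cube, where `U` bounds the `u j`, because the
`L¹` norms of the mixed derivatives of order at most one in each variable dominate the supremum.
In one variable, the mean value theorem applied to consecutive pairs among `2 ^ k` nodes yields
`2 ^ (k - 1)` points at which the derivative is small; iterating and integrating back bounds `h` on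
an interval of length `1 / K` containing `2 ^ k` grid nodes by `(1 + 2 * 2 ^ k) ^ k` times its size
at the nodes plus `(1 / K) ^ k` times the `k`-th derivative. Treating the coordinates one at a time
and taking `K = 2 ^ (a * k)` with `a` large, the gain `2 ^ (-a * k ^ 2)` beats every loss, with a
number of nodes that is only `2 ^ O(k)`.
-/

section PartialDerivatives

variable {s : ℕ} {f g : (Fin s → ℝ) → ℝ}

lemma hasDerivAt_comp_update (hf : Differentiable ℝ f) (x : Fin s → ℝ) (j : Fin s) (t : ℝ) :
    HasDerivAt (fun t => f (Function.update x j t)) (pd j f (Function.update x j t)) t := by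
  have hdiff : DifferentiableAt ℝ (fun t => f (Function.update x j t)) t :=
    (hf _).comp t (hasDerivAt_update x j t).differentiableAt
  simpa [pd] using hdiff.hasDerivAt

lemma pd_eq_fderiv_apply (hf : Differentiable ℝ f) (j : Fin s) :
    pd j f = fun x => fderiv ℝ f x (Pi.single j 1) := by
  ext x
  have hchain := (hf (Function.update x j (x j))).hasFDerivAt.comp_hasDerivAt (x j)
    (hasDerivAt_update x j (x j))
  simpa [pd, Function.comp_def] using hchain.deriv

lemma pd_sub (hf : Differentiable ℝ f) (hg : Differentiable ℝ g) (j : Fin s) :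
    pd j (f - g) = pd j f - pd j g := by
  rw [pd_eq_fderiv_apply (hf.sub hg), pd_eq_fderiv_apply hf, pd_eq_fderiv_apply hg]
  ext x
  simp [fderiv_sub (hf x) (hg x)]

lemma contDiff_pd {m n : WithTop ℕ∞} (hf : ContDiff ℝ n f) (hmn : m + 1 ≤ n) (j : Fin s) :
    ContDiff ℝ m (pd j f) := by
  rw [pd_eq_fderiv_apply ((hf.of_le hmn).differentiable (by simp))]
  exact (hf.fderiv_right hmn).clm_apply contDiff_const

lemma pd_comm (hf : ContDiff ℝ 2 f) (i j : Fin s) : pd i (pd j f) = pd j (pd i f) := by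
  have hpd (l : Fin s) : Differentiable ℝ (pd l f) :=
    (contDiff_pd (m := 1) hf (by norm_num) l).differentiable one_ne_zero
  have hf₁ : Differentiable ℝ f := hf.differentiable two_ne_zero
  rw [pd_eq_fderiv_apply (hpd j), pd_eq_fderiv_apply (hpd i), pd_eq_fderiv_apply hf₁,
    pd_eq_fderiv_apply hf₁]
  ext x
  have hf₂ : DifferentiableAt ℝ (fderiv ℝ f) x :=
    (hf.fderiv_right (m := 1) (by norm_num)).differentiable one_ne_zero x
  have hsymm : IsSymmSndFDerivAt ℝ f x := hf.contDiffAt.isSymmSndFDerivAt (by simp)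
  rw [fderiv_clm_apply hf₂ (by fun_prop), fderiv_clm_apply hf₂ (by fun_prop)]
  simpa using hsymm.eq _ _

lemma contDiff_pd_iterate (hf : ContDiff ℝ (⊤ : ℕ∞) f) (j : Fin s) (k : ℕ) :
    ContDiff ℝ (⊤ : ℕ∞) ((pd j)^[k] f) := by
  induction k with
  | zero => exact hf
  | succ k ih => rw [Function.iterate_succ_apply']; exact contDiff_pd ih (by simp) j

lemma pd_iterate_sub (hf : ContDiff ℝ (⊤ : ℕ∞) f) (hg : ContDiff ℝ (⊤ : ℕ∞) g) (j : Fin s)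
    (k : ℕ) : (pd j)^[k] (f - g) = (pd j)^[k] f - (pd j)^[k] g := by
  induction k with
  | zero => rfl
  | succ k ih =>
    simp only [Function.iterate_succ_apply', ih]
    exact pd_sub ((contDiff_pd_iterate hf j k).differentiable (by simp))
      ((contDiff_pd_iterate hg j k).differentiable (by simp)) j

lemma pd_pd_iterate_comm (hf : ContDiff ℝ (⊤ : ℕ∞) f) (i j : Fin s) (k : ℕ) :
    pd i ((pd j)^[k] f) = (pd j)^[k] (pd i f) := by
  induction k with
  | zero => rfl
  | succ k ih =>
    have hk : ContDiff ℝ 2 ((pd j)^[k] f) :=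
      (contDiff_pd_iterate hf j k).of_le (WithTop.coe_le_coe.2 le_top)
    rw [Function.iterate_succ_apply', Function.iterate_succ_apply', pd_comm hk, ih]

lemma iteratedDeriv_comp_update (hf : ContDiff ℝ (⊤ : ℕ∞) f) (x : Fin s → ℝ) (j : Fin s) (k : ℕ) :
    iteratedDeriv k (fun t => f (Function.update x j t)) =
      fun t => (pd j)^[k] f (Function.update x j t) := by
  induction k with
  | zero => exact iteratedDeriv_zero
  | succ k ih =>
    have hk : Differentiable ℝ ((pd j)^[k] f) :=
      (contDiff_pd_iterate hf j k).differentiable (by simp)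
    rw [iteratedDeriv_succ, ih, Function.iterate_succ_apply']
    exact funext fun t => (hasDerivAt_comp_update hk x j t).deriv

/-- The derivative of order `α j` in each coordinate `j` of the list `l`, the last entry of `l`
being differentiated first. The mixed partial derivative `mpd α` is the case `l = List.finRange s`;
general lists make inductive proofs about `mpd` possible. -/
def mpdAlong (l : List (Fin s)) (α : Fin s → ℕ) (f : (Fin s → ℝ) → ℝ) : (Fin s → ℝ) → ℝ :=
  l.foldr (fun j g => (pd j)^[α j] g) f

lemma mpdAlong_cons (i : Fin s) (l : List (Fin s)) (α : Fin s → ℕ) (f : (Fin s → ℝ) → ℝ) :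
    mpdAlong (i :: l) α f = (pd i)^[α i] (mpdAlong l α f) :=
  rfl

lemma contDiff_mpdAlong (hf : ContDiff ℝ (⊤ : ℕ∞) f) (l : List (Fin s)) (α : Fin s → ℕ) :
    ContDiff ℝ (⊤ : ℕ∞) (mpdAlong l α f) := by
  induction l with
  | nil => exact hf
  | cons i l ih => exact contDiff_pd_iterate ih i (α i)

lemma mpdAlong_congr {l : List (Fin s)} {α β : Fin s → ℕ} (h : ∀ i ∈ l, α i = β i)
    (f : (Fin s → ℝ) → ℝ) : mpdAlong l α f = mpdAlong l β f := by
  induction l with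
  | nil => rfl
  | cons i l ih =>
    rw [List.forall_mem_cons] at h
    rw [mpdAlong_cons, mpdAlong_cons, h.1, ih h.2]

lemma pd_mpdAlong (hf : ContDiff ℝ (⊤ : ℕ∞) f) {l : List (Fin s)} (hl : l.Nodup) {j : Fin s}
    (hj : j ∈ l) (α : Fin s → ℕ) :
    pd j (mpdAlong l α f) = mpdAlong l (α + Pi.single j 1) f := by
  induction l with
  | nil => simp at hj
  | cons i l ih =>
    rw [List.nodup_cons] at hl
    rw [mpdAlong_cons, mpdAlong_cons]
    rcases eq_or_ne j i with rfl | hji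
    · have hα : ∀ i ∈ l, (α + Pi.single j 1 : Fin s → ℕ) i = α i := fun i hi => by
        simp [ne_of_mem_of_not_mem hi hl.1]
      rw [mpdAlong_congr hα]
      simp [Function.iterate_succ_apply']
    · rw [pd_pd_iterate_comm (contDiff_mpdAlong hf l α), ih hl.2 (List.mem_of_ne_of_mem hji hj)]
      simp [hji.symm]

lemma contDiff_mpd (hf : ContDiff ℝ (⊤ : ℕ∞) f) (α : Fin s → ℕ) :
    ContDiff ℝ (⊤ : ℕ∞) (mpd α f) :=
  contDiff_mpdAlong hf _ α

lemma pd_mpd (hf : ContDiff ℝ (⊤ : ℕ∞) f) (α : Fin s → ℕ) (j : Fin s) :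
    pd j (mpd α f) = mpd (α + Pi.single j 1) f :=
  pd_mpdAlong hf (List.nodup_finRange s) (List.mem_finRange j) α

lemma mpd_zero (f : (Fin s → ℝ) → ℝ) : mpd 0 f = f :=
  (List.foldr_const id f _).trans (by simp)

lemma mpd_single (hf : ContDiff ℝ (⊤ : ℕ∞) f) (j : Fin s) (k : ℕ) :
    mpd (Pi.single j k) f = (pd j)^[k] f := by
  induction k with
  | zero => rw [Pi.single_zero, mpd_zero, Function.iterate_zero_apply]
  | succ k ih => rw [Function.iterate_succ_apply', ← ih, pd_mpd hf, ← Pi.single_add]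

end PartialDerivatives

section SobolevInequality

lemma enorm_le_enorm_add_lintegral_enorm_deriv {E : Type*} [NormedAddCommGroup E]
    [NormedSpace ℝ E] [CompleteSpace E] {g g' : ℝ → E} (hg : ∀ t, HasDerivAt g (g' t) t)
    (hg' : Continuous g') {a b t y : ℝ} (ht : t ∈ Set.Icc a b) (hy : y ∈ Set.Icc a b) :
    ‖g y‖ₑ ≤ ‖g t‖ₑ + ∫⁻ z in Set.Ico a b, ‖g' z‖ₑ := by
  have hftc : g y = g t + ∫ z in t..y, g' z := by
    rw [intervalIntegral.integral_eq_sub_of_hasDerivAt (fun x _ => hg x)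
      (hg'.intervalIntegrable _ _), add_sub_cancel]
  have hsubset : Set.uIoc t y ⊆ Set.Ioc a b :=
    Set.Ioc_subset_Ioc (le_min ht.1 hy.1) (max_le ht.2 hy.2)
  have hint : ‖∫ z in t..y, g' z‖ₑ ≤ ∫⁻ z in Set.Ico a b, ‖g' z‖ₑ := calc
    ‖∫ z in t..y, g' z‖ₑ = ‖∫ z in Set.uIoc t y, g' z‖ₑ := by
      rw [← ofReal_norm, ← ofReal_norm, intervalIntegral.norm_intervalIntegral_eq]
    _ ≤ ∫⁻ z in Set.uIoc t y, ‖g' z‖ₑ := enorm_integral_le_lintegral_enorm _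
    _ ≤ ∫⁻ z in Set.Ioc a b, ‖g' z‖ₑ := lintegral_mono_set hsubset
    _ = ∫⁻ z in Set.Ico a b, ‖g' z‖ₑ := setLIntegral_congr Ico_ae_eq_Ioc.symm
  rw [hftc]
  exact (enorm_add_le _ _).trans (by gcongr)

lemma mul_enorm_le_lintegral_enorm_add_deriv {E : Type*} [NormedAddCommGroup E]
    [NormedSpace ℝ E] [CompleteSpace E] {g g' : ℝ → E} (hg : ∀ t, HasDerivAt g (g' t) t)
    (hg' : Continuous g') {a b y : ℝ} (hy : y ∈ Set.Icc a b) :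
    ENNReal.ofReal (b - a) * ‖g y‖ₑ ≤
      (∫⁻ t in Set.Ico a b, ‖g t‖ₑ) +
        ENNReal.ofReal (b - a) * ∫⁻ t in Set.Ico a b, ‖g' t‖ₑ := by
  have hgc : Continuous g := continuous_iff_continuousAt.2 fun t => (hg t).continuousAt
  calc ENNReal.ofReal (b - a) * ‖g y‖ₑ = ∫⁻ _ in Set.Ico a b, ‖g y‖ₑ := by
        rw [setLIntegral_const, Real.volume_Ico, mul_comm]
    _ ≤ ∫⁻ t in Set.Ico a b, (‖g t‖ₑ + ∫⁻ z in Set.Ico a b, ‖g' z‖ₑ) :=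
        setLIntegral_mono' measurableSet_Ico fun t ht =>
          enorm_le_enorm_add_lintegral_enorm_deriv hg hg' (Set.Ico_subset_Icc_self ht) hy
    _ = _ := by
        rw [lintegral_add_left' hgc.enorm.aemeasurable, setLIntegral_const, Real.volume_Ico,
          mul_comm]

/-- Lebesgue measure on `[0,1)` in every coordinate, in the form expected by iterated marginal
integrals `∫⋯∫⁻`. -/
abbrev unitIntervalMeasures (s : ℕ) : Fin s → Measure ℝ :=
  fun _ => volume.restrict (Set.Ico (0 : ℝ) 1)

variable {s : ℕ} {f : (Fin s → ℝ) → ℝ}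

lemma lmarginal_enorm_le_add_lmarginal_pd (hf : ContDiff ℝ 1 f) {T : Finset (Fin s)} {j : Fin s}
    (hj : j ∉ T) {x : Fin s → ℝ} (hx : x j ∈ Set.Icc (0 : ℝ) 1) :
    (∫⋯∫⁻_T, (fun y => ‖f y‖ₑ) ∂unitIntervalMeasures s) x ≤
      (∫⋯∫⁻_insert j T, (fun y => ‖f y‖ₑ) ∂unitIntervalMeasures s) x +
        (∫⋯∫⁻_insert j T, (fun y => ‖pd j f y‖ₑ) ∂unitIntervalMeasures s) x := by
  have hpd : Continuous (pd j f) := (contDiff_pd (m := 0) hf (by simp) j).continuous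
  have hmeas : Measurable fun y => ‖f y‖ₑ := hf.continuous.enorm.measurable
  have hinner : Measurable fun z : Fin s → ℝ =>
      ∫⁻ t, ‖f (Function.update z j t)‖ₑ ∂unitIntervalMeasures s j := by
    simpa only [lmarginal_singleton] using hmeas.lmarginal (unitIntervalMeasures s) (s := {j})
  rw [lmarginal_insert' _ hmeas hj, lmarginal_insert' _ hpd.enorm.measurable hj]
  unfold lmarginal
  refine (lintegral_mono fun y => ?_).trans_eq
    (lintegral_add_left (hinner.comp measurable_updateFinset) _)
  set z := Function.updateFinset x T y
  have hz : z j ∈ Set.Icc (0 : ℝ) 1 := by simpa [z, Function.updateFinset, hj] using hx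
  have hone := mul_enorm_le_lintegral_enorm_add_deriv
    (hasDerivAt_comp_update (hf.differentiable one_ne_zero) z j)
    (hpd.comp (continuous_const.update j continuous_id)) hz
  simpa using hone

lemma prod_pow_add_single {ι M : Type*} [Fintype ι] [DecidableEq ι] [CommMonoid M] (v : ι → M)
    (α : ι → ℕ) (j : ι) :
    ∏ i, v i ^ (α + Pi.single j 1 : ι → ℕ) i = (∏ i, v i ^ α i) * v j := by
  simp only [Pi.add_apply, pow_add, Finset.prod_mul_distrib]
  simp [Pi.single_apply]

lemma lmarginal_compl_enorm_mpd_le (hf : ContDiff ℝ (⊤ : ℕ∞) f) {v : Fin s → ℝ≥0∞} {A : ℝ≥0∞}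
    (hA : ∀ α : Fin s → ℕ, ∫⁻ x in unitCube s, ‖mpd α f x‖ₑ ≤ A * ∏ j, v j ^ α j)
    {x : Fin s → ℝ} (hx : x ∈ Set.Icc 0 1) (S : Finset (Fin s)) (α : Fin s → ℕ) :
    (∫⋯∫⁻_Sᶜ, (fun y => ‖mpd α f y‖ₑ) ∂unitIntervalMeasures s) x ≤
      A * (∏ j, v j ^ α j) * ∏ j ∈ S, (1 + v j) := by
  induction S using Finset.induction_on generalizing α with
  | empty =>
    rw [Finset.compl_empty, lmarginal_univ, Finset.prod_empty, mul_one,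
      ← Measure.restrict_pi_pi]
    exact hA α
  | insert j S hj ih =>
    have hcompl : Sᶜ = insert j (insert j S)ᶜ := by
      rw [Finset.compl_insert, Finset.insert_erase (Finset.mem_compl.2 hj)]
    have hstep := lmarginal_enorm_le_add_lmarginal_pd
      ((contDiff_mpd hf α).of_le (WithTop.coe_le_coe.2 le_top)) (T := (insert j S)ᶜ) (j := j)
      (by simp) ⟨hx.1 j, hx.2 j⟩
    rw [← hcompl, pd_mpd hf] at hstep
    calc _ ≤ _ := hstep
      _ ≤ A * (∏ i, v i ^ α i) * ∏ i ∈ S, (1 + v i) +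
          A * (∏ i, v i ^ (α + Pi.single j 1 : Fin s → ℕ) i) * ∏ i ∈ S, (1 + v i) :=
        add_le_add (ih α) (ih _)
      _ = A * (∏ i, v i ^ α i) * ∏ i ∈ insert j S, (1 + v i) := by
        rw [prod_pow_add_single, Finset.prod_insert hj]
        ring

lemma unitCube_subset_Icc (s : ℕ) : unitCube s ⊆ Set.Icc 0 1 := fun _ hx =>
  ⟨fun j => (hx j trivial).1, fun j => (hx j trivial).2.le⟩

lemma integrableOn_unitCube (hf : Continuous f) : IntegrableOn f (unitCube s) :=
  (hf.continuousOn.integrableOn_compact isCompact_Icc).mono_set (unitCube_subset_Icc s)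

lemma abs_mpd_le_normS_mul {u : Fin s → ℝ} (hu : ∀ j, 0 < u j) (hf : MemS u f) (α : Fin s → ℕ)
    {x : Fin s → ℝ} (hx : x ∈ Set.Icc 0 1) :
    |mpd α f x| ≤ normS u f * (∏ j, u j ^ α j) * ∏ j, (1 + u j) := by
  have hnorm : 0 ≤ normS u f := Real.iSup_nonneg fun β =>
    div_nonneg (integral_nonneg fun _ => abs_nonneg _)
      (Finset.prod_nonneg fun j _ => pow_nonneg (hu j).le _)
  have hpow (β : Fin s → ℕ) : ENNReal.ofReal (∏ j, u j ^ β j) =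
      ∏ j, ENNReal.ofReal (u j) ^ β j := by
    simp only [ENNReal.ofReal_prod_of_nonneg fun j _ => pow_nonneg (hu j).le (β j),
      ENNReal.ofReal_pow (hu _).le]
  have hadd : ENNReal.ofReal (∏ j, (1 + u j)) = ∏ j, (1 + ENNReal.ofReal (u j)) := by
    simp only [ENNReal.ofReal_prod_of_nonneg fun j _ => add_nonneg zero_le_one (hu j).le,
      ENNReal.ofReal_add zero_le_one (hu _).le, ENNReal.ofReal_one]
  have hL1 (β : Fin s → ℕ) : ∫⁻ x in unitCube s, ‖mpd β f x‖ₑ ≤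
      ENNReal.ofReal (normS u f) * ∏ j, ENNReal.ofReal (u j) ^ β j := by
    have hβ : ∫ x in unitCube s, |mpd β f x| ≤ normS u f * ∏ j, u j ^ β j :=
      (div_le_iff₀ (Finset.prod_pos fun j _ => pow_pos (hu j) _)).1 (le_ciSup hf.2 β)
    rw [← ofReal_integral_norm_eq_lintegral_enorm
      (integrableOn_unitCube (contDiff_mpd hf.1 β).continuous), ← hpow, ← ENNReal.ofReal_mul hnorm]
    exact ENNReal.ofReal_le_ofReal hβ
  have hsup := lmarginal_compl_enorm_mpd_le hf.1 hL1 hx Finset.univ α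
  have hprod : 0 ≤ ∏ j, u j ^ α j := Finset.prod_nonneg fun j _ => pow_nonneg (hu j).le _
  rw [Finset.compl_univ, lmarginal_empty, ← hpow, ← hadd, ← ENNReal.ofReal_mul hnorm,
    ← ENNReal.ofReal_mul (mul_nonneg hnorm hprod), Real.enorm_eq_ofReal_abs] at hsup
  refine (ENNReal.ofReal_le_ofReal_iff ?_).1 hsup
  exact mul_nonneg (mul_nonneg hnorm hprod)
    (Finset.prod_nonneg fun j _ => add_nonneg zero_le_one (hu j).le)

lemma abs_pd_iterate_le_of_normS_le_one {u : Fin s → ℝ} (hu : ∀ j, 0 < u j) (hf : MemS u f)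
    (hf₁ : normS u f ≤ 1) {U : ℝ} (hU : ∀ j, u j ≤ U) (j : Fin s) (k : ℕ) {x : Fin s → ℝ}
    (hx : x ∈ Set.Icc 0 1) :
    |(pd j)^[k] f x| ≤ U ^ k * ∏ i, (1 + u i) := by
  have hC : 0 ≤ ∏ i, (1 + u i) := Finset.prod_nonneg fun i _ => add_nonneg zero_le_one (hu i).le
  have hsingle : ∏ i, u i ^ (Pi.single j k : Fin s → ℕ) i = u j ^ k := by
    simp [Pi.single_apply]
  calc |(pd j)^[k] f x| ≤ normS u f * u j ^ k * ∏ i, (1 + u i) := by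
        simpa only [mpd_single hf.1, hsingle] using abs_mpd_le_normS_mul hu hf (Pi.single j k) hx
    _ ≤ 1 * U ^ k * ∏ i, (1 + u i) := by
        gcongr
        exacts [pow_nonneg (hu j).le k, (hu j).le, hU j]
    _ = U ^ k * ∏ i, (1 + u i) := by rw [one_mul]

end SobolevInequality

section OneVariable

variable {f : ℝ → ℝ}

lemma exists_abs_deriv_le_of_add_le (hf : Differentiable ℝ f) {x y σ ε : ℝ} (hσ : 0 < σ)
    (hxy : x + σ ≤ y) (hx : |f x| ≤ ε) (hy : |f y| ≤ ε) :
    ∃ q ∈ Set.Ioo x y, |deriv f q| ≤ 2 * ε / σ := by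
  obtain ⟨q, hq, hslope⟩ := exists_deriv_eq_slope f (by linarith : x < y)
    hf.continuous.continuousOn hf.differentiableOn
  refine ⟨q, hq, ?_⟩
  have hnum : |f y - f x| ≤ 2 * ε := (abs_sub _ _).trans (by linarith)
  rw [hslope, abs_div, abs_of_pos (by linarith : 0 < y - x)]
  exact div_le_div₀ ((abs_nonneg _).trans hnum) hnum hσ (by linarith)

lemma abs_le_add_of_abs_deriv_le (hf : Differentiable ℝ f) {a b p t ε B : ℝ}
    (hp : p ∈ Set.Icc a b) (ht : t ∈ Set.Icc a b) (hfp : |f p| ≤ ε)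
    (hB : ∀ x ∈ Set.Icc a b, |deriv f x| ≤ B) : |f t| ≤ ε + B * (b - a) := by
  have hmvt : |f t - f p| ≤ B * |t - p| :=
    (convex_Icc a b).norm_image_sub_le_of_norm_deriv_le (fun x _ => hf x) hB hp ht
  have hdist : |t - p| ≤ b - a := abs_sub_le_iff.2
    ⟨by linarith [hp.1, ht.2], by linarith [hp.2, ht.1]⟩
  have hB₀ : 0 ≤ B := (abs_nonneg _).trans (hB t ht)
  linarith [abs_sub_abs_le_abs_sub (f t) (f p), mul_le_mul_of_nonneg_left hdist hB₀]

lemma abs_le_of_abs_le_at_separated_points {a b σ M : ℝ} (hσ : 0 < σ) {k : ℕ} {ε : ℝ}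
    {p : ℕ → ℝ} (hf : ContDiff ℝ k f) (hp : ∀ i < 2 ^ k, p i ∈ Set.Icc a b)
    (hsep : ∀ i, i + 1 < 2 ^ k → p i + σ ≤ p (i + 1)) (hfp : ∀ i < 2 ^ k, |f (p i)| ≤ ε)
    (hM : ∀ t ∈ Set.Icc a b, |iteratedDeriv k f t| ≤ M) {t : ℝ} (ht : t ∈ Set.Icc a b) :
    |f t| ≤ (1 + 2 * (b - a) / σ) ^ k * ε + (b - a) ^ k * M := by
  have hε : 0 ≤ ε := (abs_nonneg _).trans (hfp 0 (by positivity))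
  induction k generalizing f ε p t with
  | zero => simpa using add_le_add hε (hM t ht)
  | succ k ih =>
    have hdiff : Differentiable ℝ f := hf.differentiable (by simp)
    have hderiv : ContDiff ℝ k (deriv f) := (contDiff_succ_iff_deriv.1 (mod_cast hf)).2.2
    have hpair : ∀ i < 2 ^ k,
        ∃ q ∈ Set.Ioo (p (2 * i)) (p (2 * i + 1)), |deriv f q| ≤ 2 * ε / σ := fun i hi =>
      exists_abs_deriv_le_of_add_le hdiff hσ (hsep _ (by omega)) (hfp _ (by omega))
        (hfp _ (by omega))
    choose! q hq hq_le using hpair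
    have hq_mem : ∀ i < 2 ^ k, q i ∈ Set.Icc a b := fun i hi =>
      ⟨(hp (2 * i) (by omega)).1.trans (hq i hi).1.le,
        (hq i hi).2.le.trans (hp (2 * i + 1) (by omega)).2⟩
    have hq_sep : ∀ i, i + 1 < 2 ^ k → q i + σ ≤ q (i + 1) := fun i hi => by
      have hgap : p (2 * i + 1) + σ ≤ p (2 * (i + 1)) := hsep (2 * i + 1) (by omega)
      linarith [(hq i (by omega)).2, (hq (i + 1) hi).1]
    have hderiv_le : ∀ x ∈ Set.Icc a b, |deriv f x| ≤
        (1 + 2 * (b - a) / σ) ^ k * (2 * ε / σ) + (b - a) ^ k * M := fun x hx =>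
      ih hderiv hq_mem hq_sep hq_le (fun y hy => by simpa [iteratedDeriv_succ'] using hM y hy) hx
        (by positivity)
    have hratio : 0 ≤ 2 * (b - a) / σ :=
      div_nonneg (by linarith [ht.1.trans ht.2]) hσ.le
    have hone : ε ≤ (1 + 2 * (b - a) / σ) ^ k * ε :=
      le_mul_of_one_le_left hε (one_le_pow₀ (by linarith))
    calc |f t| ≤ ε + ((1 + 2 * (b - a) / σ) ^ k * (2 * ε / σ) + (b - a) ^ k * M) * (b - a) :=
          abs_le_add_of_abs_deriv_le hdiff (hp 0 (by positivity)) ht (hfp 0 (by positivity))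
            hderiv_le
      _ ≤ (1 + 2 * (b - a) / σ) ^ k * ε +
          ((1 + 2 * (b - a) / σ) ^ k * (2 * ε / σ) + (b - a) ^ k * M) * (b - a) := by gcongr
      _ = (1 + 2 * (b - a) / σ) ^ (k + 1) * ε + (b - a) ^ (k + 1) * M := by ring

lemma exists_lt_mem_Icc_div {K : ℕ} (hK : 0 < K) {t : ℝ} (ht : t ∈ Set.Icc (0 : ℝ) 1) :
    ∃ r < K, t ∈ Set.Icc ((r : ℝ) / K) ((r + 1) / K) := by
  have hKR : (0 : ℝ) < K := mod_cast hK
  simp only [Set.mem_Icc, div_le_iff₀ hKR, le_div_iff₀ hKR]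
  rcases ht.2.lt_or_eq with h | rfl
  · exact ⟨⌊t * K⌋₊, (Nat.floor_lt (mul_nonneg ht.1 hKR.le)).2 (mul_lt_of_lt_one_left hKR h),
      Nat.floor_le (mul_nonneg ht.1 hKR.le), (Nat.lt_floor_add_one _).le⟩
  · exact ⟨K - 1, by omega, by simp [Nat.cast_sub hK], by simp [Nat.cast_sub hK]⟩

/-- The `i`-th of the `N` equidistant nodes `0, 1/N, …, (N-1)/N` of `[0,1)`. -/
def gridNode (N : ℕ) (i : Fin N) : ℝ := i / N

lemma gridNode_mem_Ico (N : ℕ) (i : Fin N) : gridNode N i ∈ Set.Ico (0 : ℝ) 1 :=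
  ⟨by unfold gridNode; positivity,
    (div_lt_one (mod_cast i.pos)).2 (mod_cast i.isLt)⟩

lemma abs_le_of_abs_le_at_gridNode {k K : ℕ} (hK : 0 < K) {ε M : ℝ} (hf : ContDiff ℝ k f)
    (hgrid : ∀ i, |f (gridNode (K * 2 ^ k) i)| ≤ ε)
    (hM : ∀ t ∈ Set.Icc (0 : ℝ) 1, |iteratedDeriv k f t| ≤ M) {t : ℝ}
    (ht : t ∈ Set.Icc (0 : ℝ) 1) :
    |f t| ≤ (1 + 2 * 2 ^ k) ^ k * ε + (1 / K) ^ k * M := by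
  obtain ⟨r, hrK, htr⟩ := exists_lt_mem_Icc_div hK ht
  have hKR : (0 : ℝ) < K := mod_cast hK
  have hcell : Set.Icc ((r : ℝ) / K) ((r + 1) / K) ⊆ Set.Icc 0 1 :=
    Set.Icc_subset_Icc (by positivity) ((div_le_one hKR).2 (mod_cast hrK))
  have hindex : ∀ m < 2 ^ k, r * 2 ^ k + m < K * 2 ^ k := fun m hm => by nlinarith
  have hmem : ∀ m < 2 ^ k, ((r * 2 ^ k + m : ℕ) : ℝ) / (K * 2 ^ k : ℕ) ∈
      Set.Icc ((r : ℝ) / K) ((r + 1) / K) := fun m hm => by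
    have hm' : (m : ℝ) / 2 ^ k ≤ 1 := (div_le_one (by positivity)).2 (mod_cast hm.le)
    have hsplit : ((r * 2 ^ k + m : ℕ) : ℝ) / (K * 2 ^ k : ℕ) = (r + m / 2 ^ k) / K := by
      push_cast; field_simp
    rw [hsplit]
    constructor <;> gcongr
    exact le_add_of_nonneg_right (by positivity)
  have hbound := abs_le_of_abs_le_at_separated_points (σ := 1 / (K * 2 ^ k)) (by positivity) hf
    hmem (fun m _ => le_of_eq (by push_cast; ring)) (fun m hm => hgrid ⟨_, hindex m hm⟩)
    (fun t ht => hM t (hcell ht)) htr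
  have hwidth : ((r : ℝ) + 1) / K - r / K = 1 / K := by ring
  have hratio : 2 * (1 / (K : ℝ)) / (1 / (K * 2 ^ k)) = 2 * 2 ^ k := by field_simp
  rwa [hwidth, hratio] at hbound

end OneVariable

section Grid

lemma update_mem_Icc {ι : Type*} [DecidableEq ι] {π : ι → Type*} [∀ i, Preorder (π i)]
    {a b x : ∀ i, π i} (hx : x ∈ Set.Icc a b) {j : ι} {t : π j} (ht : t ∈ Set.Icc (a j) (b j)) :
    Function.update x j t ∈ Set.Icc a b :=
  ⟨le_update_iff.2 ⟨ht.1, fun i _ => hx.1 i⟩, update_le_iff.2 ⟨ht.2, fun i _ => hx.2 i⟩⟩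

variable {s : ℕ} {h : (Fin s → ℝ) → ℝ}

lemma abs_le_of_eq_zero_at_grid_of_notMem {k K : ℕ} (hK : 0 < K) {M : ℝ}
    (hh : ContDiff ℝ (⊤ : ℕ∞) h) (hM : ∀ j, ∀ x ∈ Set.Icc 0 1, |(pd j)^[k] h x| ≤ M)
    (hgrid : ∀ r : Fin s → Fin (K * 2 ^ k), h (fun j => gridNode _ (r j)) = 0)
    (S : Finset (Fin s)) {x : Fin s → ℝ} (hx : x ∈ Set.Icc 0 1)
    (hxS : ∀ j ∉ S, x j ∈ Set.range (gridNode (K * 2 ^ k))) :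
    |h x| ≤ S.card * ((1 + 2 * 2 ^ k) ^ k) ^ S.card * ((1 / K) ^ k * M) := by
  induction S using Finset.induction_on generalizing x with
  | empty =>
    choose r hr using fun j => hxS j (Finset.notMem_empty j)
    rw [← funext hr, hgrid]
    simp
  | insert j S hj ih =>
    set W : ℝ := (1 + 2 * 2 ^ k) ^ k
    set δ : ℝ := (1 / K) ^ k * M
    have hM₀ : 0 ≤ M := (abs_nonneg _).trans (hM j x hx)
    have hW : 1 ≤ W := one_le_pow₀ (le_add_of_nonneg_right (by positivity))
    have hline : ContDiff ℝ k fun t => h (Function.update x j t) :=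
      (hh.of_le (WithTop.coe_le_coe.2 le_top)).comp (contDiff_update k x j)
    have hnodes : ∀ i, |h (Function.update x j (gridNode (K * 2 ^ k) i))| ≤
        S.card * W ^ S.card * δ := fun i => by
      refine ih (update_mem_Icc hx (Set.Ico_subset_Icc_self (gridNode_mem_Ico _ i)))
        fun l hl => ?_
      rcases eq_or_ne l j with rfl | hlj
      · exact ⟨i, by simp⟩
      · simpa [hlj] using hxS l (by simp [hlj, hl])
    have hone : |h x| ≤ W * (S.card * W ^ S.card * δ) + δ := by
      simpa only [Function.update_eq_self] using abs_le_of_abs_le_at_gridNode hK hline hnodes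
        (fun t ht => by
          rw [iteratedDeriv_comp_update hh]
          exact hM j _ (update_mem_Icc hx ht))
        ⟨hx.1 j, hx.2 j⟩
    have hδ : δ ≤ W ^ (S.card + 1) * δ :=
      le_mul_of_one_le_left (by positivity) (one_le_pow₀ hW)
    rw [Finset.card_insert_of_notMem hj]
    push_cast
    linear_combination hone + hδ

lemma abs_le_of_eq_zero_at_grid {k K : ℕ} (hK : 0 < K) {M : ℝ} (hh : ContDiff ℝ (⊤ : ℕ∞) h)
    (hM : ∀ j, ∀ x ∈ Set.Icc 0 1, |(pd j)^[k] h x| ≤ M)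
    (hgrid : ∀ r : Fin s → Fin (K * 2 ^ k), h (fun j => gridNode _ (r j)) = 0)
    {x : Fin s → ℝ} (hx : x ∈ Set.Icc 0 1) :
    |h x| ≤ s * ((1 + 2 * 2 ^ k) ^ k) ^ s * ((1 / K) ^ k * M) := by
  simpa using abs_le_of_eq_zero_at_grid_of_notMem hK hh hM hgrid Finset.univ hx (by simp)

end Grid

section MinimalError

variable {n s : ℕ}

lemma minErr_le_of_forall_abs_intBox_sub_le {ι : Type*} [Fintype ι] [Nonempty ι]
    (hn : Fintype.card ι ≤ n) {t : ι → Fin s → ℝ} (ht : ∀ i, t i ∈ unitCube s)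
    {H : Set ((Fin s → ℝ) → ℝ)} {N : ((Fin s → ℝ) → ℝ) → ℝ} {ε : ℝ}
    (hε : ∀ f ∈ H, ∀ g ∈ H, N f ≤ 1 → N g ≤ 1 → (∀ i, f (t i) = g (t i)) →
      |intBox s f - intBox s g| ≤ ε) :
    minErr n s H N ≤ ENNReal.ofReal ε := by
  classical
  obtain ⟨e⟩ : Nonempty (ι ↪ Fin n) := Function.Embedding.nonempty_of_card_le (by simpa using hn)
  obtain ⟨σ, hσ⟩ : ∃ σ : Fin n → ι, Function.Surjective σ :=
    ⟨_, Function.invFun_surjective e.injective⟩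
  -- `φ` integrates an arbitrary element of the unit ball with the observed values.
  let φ : (Fin n → ℝ) → ℝ := fun y =>
    if h : ∃ g ∈ H, N g ≤ 1 ∧ (fun i => g (t (σ i))) = y then intBox s h.choose else 0
  refine iInf_le_of_le (t ∘ σ) (iInf_le_of_le (fun i => ht (σ i)) (iInf_le_of_le φ ?_))
  refine iSup_le fun f => iSup_le fun hf => iSup_le fun hfN => ENNReal.ofReal_le_ofReal ?_
  have hex : ∃ g ∈ H, N g ≤ 1 ∧ (fun i => g (t (σ i))) = fun i => f (t (σ i)) :=
    ⟨f, hf, hfN, rfl⟩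
  obtain ⟨hg, hgN, hgf⟩ := hex.choose_spec
  have hφ : φ (fun i => f (t (σ i))) = intBox s hex.choose := dif_pos hex
  change |intBox s f - φ fun i => f (t (σ i))| ≤ ε
  rw [hφ]
  exact hε f hf _ hg hfN hgN (hσ.forall.2 fun i => (congrFun hgf i).symm)

lemma abs_intBox_sub_le {f g : (Fin s → ℝ) → ℝ} (hf : Continuous f) (hg : Continuous g) {C : ℝ}
    (hC : ∀ x ∈ unitCube s, |f x - g x| ≤ C) : |intBox s f - intBox s g| ≤ C := by
  have hvol : volume (unitCube s) = 1 := by simp [unitCube, Real.volume_pi_Ico]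
  have hint := norm_setIntegral_le_of_norm_le_const (μ := volume) (s := unitCube s)
    (f := fun x => f x - g x) (by simp [hvol]) hC
  rw [integral_sub (integrableOn_unitCube hf) (integrableOn_unitCube hg)] at hint
  simpa [intBox, Measure.real, hvol] using hint

lemma minErr_normS_le_of_pow_le {k K : ℕ} (hK : 0 < K) (hn : (K * 2 ^ k) ^ s ≤ n)
    {u : Fin s → ℝ} (hu : ∀ j, 0 < u j) {U : ℝ} (hU : ∀ j, u j ≤ U) :
    minErr n s {f | MemS u f} (normS u) ≤ ENNReal.ofReal
      (s * ((1 + 2 * 2 ^ k) ^ k) ^ s * ((1 / K) ^ k * (2 * (U ^ k * ∏ i, (1 + u i))))) := by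
  have : NeZero (K * 2 ^ k) := ⟨by positivity⟩
  refine minErr_le_of_forall_abs_intBox_sub_le
    (t := fun (r : Fin s → Fin (K * 2 ^ k)) j => gridNode _ (r j)) (by simpa using hn)
    (fun r j _ => gridNode_mem_Ico _ (r j)) fun f hf g hg hf₁ hg₁ hfg => ?_
  have hpd : ∀ j, ∀ x ∈ Set.Icc 0 1,
      |(pd j)^[k] (f - g) x| ≤ 2 * (U ^ k * ∏ i, (1 + u i)) := fun j x hx => by
    rw [pd_iterate_sub hf.1 hg.1, Pi.sub_apply, two_mul]
    exact (abs_sub _ _).trans (add_le_add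
      (abs_pd_iterate_le_of_normS_le_one hu hf hf₁ hU j k hx)
      (abs_pd_iterate_le_of_normS_le_one hu hg hg₁ hU j k hx))
  refine abs_intBox_sub_le hf.1.continuous hg.1.continuous fun x hx => ?_
  exact abs_le_of_eq_zero_at_grid hK (hf.1.sub hg.1) hpd (fun r => sub_eq_zero.2 (hfg r))
    (unitCube_subset_Icc s hx)

end MinimalError

section Asymptotics

lemma one_add_two_mul_two_pow_pow_le (k : ℕ) :
    (1 + 2 * 2 ^ k : ℝ) ^ k ≤ 2 ^ (3 * k ^ 2) := by
  have hbase : (1 + 2 * 2 ^ k : ℝ) ≤ 2 ^ (k + 2) := by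
    rw [pow_add]; linarith [one_le_pow₀ (one_le_two (α := ℝ)) (n := k)]
  have hexponent : (k + 2) * k ≤ 3 * k ^ 2 := by nlinarith [Nat.le_self_pow two_ne_zero k]
  calc (1 + 2 * 2 ^ k : ℝ) ^ k ≤ (2 ^ (k + 2)) ^ k := by gcongr
    _ = 2 ^ ((k + 2) * k) := (pow_mul _ _ _).symm
    _ ≤ 2 ^ (3 * k ^ 2) := pow_le_pow_right₀ one_le_two hexponent

lemma grid_error_bound_le_one_div_two_pow_sq (s b k : ℕ) {C : ℝ} (hC : 0 ≤ C) :
    s * ((1 + 2 * 2 ^ k : ℝ) ^ k) ^ s *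
        ((1 / (2 ^ ((3 * s + b + 1) * k) : ℕ)) ^ k * (2 * ((2 ^ b) ^ k * C))) ≤
      2 * s * C * (1 / 2 ^ k ^ 2) := by
  have hW : ((1 + 2 * 2 ^ k : ℝ) ^ k) ^ s ≤ 2 ^ (3 * s * k ^ 2) := calc
    ((1 + 2 * 2 ^ k : ℝ) ^ k) ^ s ≤ (2 ^ (3 * k ^ 2)) ^ s := by
      gcongr; exact one_add_two_mul_two_pow_pow_le k
    _ = 2 ^ (3 * s * k ^ 2) := by rw [← pow_mul]; ring_nf
  have hU : ((2 : ℝ) ^ b) ^ k ≤ 2 ^ (b * k ^ 2) := by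
    rw [← pow_mul]
    exact pow_le_pow_right₀ one_le_two (Nat.mul_le_mul_left _ (Nat.le_self_pow two_ne_zero k))
  have hgain : (1 / (2 ^ ((3 * s + b + 1) * k) : ℕ) : ℝ) ^ k =
      1 / (2 ^ (3 * s * k ^ 2) * 2 ^ (b * k ^ 2) * 2 ^ k ^ 2) := by
    push_cast
    rw [div_pow, one_pow, ← pow_mul, ← pow_add, ← pow_add]
    ring_nf
  rw [hgain]
  calc _ ≤ s * (2 : ℝ) ^ (3 * s * k ^ 2) *
        (1 / (2 ^ (3 * s * k ^ 2) * 2 ^ (b * k ^ 2) * 2 ^ k ^ 2) *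
          (2 * (2 ^ (b * k ^ 2) * C))) := by gcongr
    _ = 2 * s * C * (1 / 2 ^ k ^ 2) := by field_simp

lemma log_le_mul_log_div_add_one {D n : ℕ} (hD : 0 < D) (hn : 0 < n) :
    Real.log n ≤ D * ((Nat.log 2 n / D : ℕ) + 1) * Real.log 2 := by
  have hlog : Nat.log 2 n < D * (Nat.log 2 n / D + 1) := Nat.lt_mul_div_succ _ hD
  have hpow : (n : ℝ) ≤ 2 ^ (D * (Nat.log 2 n / D + 1)) :=
    mod_cast (Nat.lt_pow_of_log_lt one_lt_two hlog).le
  simpa [Real.log_pow] using Real.log_le_log (mod_cast hn) hpow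

lemma one_div_two_pow_sq_le_exp {D n : ℕ} (hD : 0 < D) (hn : 0 < n) :
    1 / 2 ^ (Nat.log 2 n / D) ^ 2 ≤
      2 * Real.exp (-(1 / (2 * D ^ 2 * Real.log 2)) * Real.log n ^ 2) := by
  set k := Nat.log 2 n / D
  have hsq : Real.log n ^ 2 ≤ (k ^ 2 + 1) * Real.log 2 * (2 * D ^ 2 * Real.log 2) := calc
    Real.log n ^ 2 ≤ (D * (k + 1) * Real.log 2) ^ 2 := by
      have := Real.log_natCast_nonneg n
      gcongr
      exact log_le_mul_log_div_add_one hD hn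
    _ = D ^ 2 * (k + 1) ^ 2 * Real.log 2 ^ 2 := by ring
    _ ≤ D ^ 2 * (2 * (k ^ 2 + 1 ^ 2)) * Real.log 2 ^ 2 := by gcongr; exact add_sq_le
    _ = (k ^ 2 + 1) * Real.log 2 * (2 * D ^ 2 * Real.log 2) := by ring
  have hexponent : 1 / (2 * D ^ 2 * Real.log 2) * Real.log n ^ 2 ≤ (k ^ 2 + 1) * Real.log 2 := by
    rwa [one_div_mul_eq_div, div_le_iff₀ (by positivity)]
  have hexp : Real.exp (-((k ^ 2 + 1) * Real.log 2)) = 1 / 2 ^ k ^ 2 / 2 := by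
    have hlog : ((k : ℝ) ^ 2 + 1) * Real.log 2 = Real.log (2 ^ (k ^ 2 + 1)) := by
      rw [Real.log_pow]; push_cast; rfl
    rw [hlog, Real.exp_neg, Real.exp_log (by positivity), pow_succ]
    field_simp
  calc (1 : ℝ) / 2 ^ k ^ 2 = 2 * Real.exp (-((k ^ 2 + 1) * Real.log 2)) := by rw [hexp]; ring
    _ ≤ _ := by rw [neg_mul]; gcongr

end Asymptotics

theorem statement3_general {s : ℕ} {u : Fin s → ℝ} (hu : ∀ j, 0 < u j) :
    ∃ c₅ c₆ : ℝ, 0 < c₅ ∧ 0 < c₆ ∧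
      ∀ n : ℕ, 0 < n →
        minErr n s {f | MemS u f} (normS u) ≤
          ENNReal.ofReal (c₅ * Real.exp (-c₆ * (Real.log n) ^ 2)) := by
  obtain ⟨U, hU⟩ := (Set.finite_range u).bddAbove
  obtain ⟨b, hb⟩ := pow_unbounded_of_one_lt U (one_lt_two (α := ℝ))
  have hub : ∀ j, u j ≤ 2 ^ b := fun j => (hU ⟨j, rfl⟩).trans hb.le
  have hC : 0 < ∏ i, (1 + u i) := Finset.prod_pos fun i _ => add_pos one_pos (hu i)
  set C := ∏ i, (1 + u i)
  set D := (3 * s + b + 2) * (s + 1) with hD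
  refine ⟨4 * (s + 1) * C, 1 / (2 * D ^ 2 * Real.log 2), by positivity, by positivity,
    fun n hn => ?_⟩
  set k := Nat.log 2 n / D
  have hnodes : (2 ^ ((3 * s + b + 1) * k) * 2 ^ k) ^ s ≤ n := calc
    (2 ^ ((3 * s + b + 1) * k) * 2 ^ k) ^ s = 2 ^ ((3 * s + b + 2) * s * k) := by
      rw [← pow_add, ← pow_mul]; ring_nf
    _ ≤ 2 ^ (D * k) := by rw [hD]; gcongr <;> simp
    _ ≤ 2 ^ Nat.log 2 n := Nat.pow_le_pow_right two_pos (Nat.mul_div_le _ _)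
    _ ≤ n := Nat.pow_log_le_self 2 hn.ne'
  refine (minErr_normS_le_of_pow_le (by positivity) hnodes hu hub).trans
    (ENNReal.ofReal_le_ofReal
      ((grid_error_bound_le_one_div_two_pow_sq s b k hC.le).trans ?_))
  calc 2 * s * C * (1 / 2 ^ k ^ 2)
      ≤ 2 * (s + 1) * C * (2 * Real.exp (-(1 / (2 * D ^ 2 * Real.log 2)) * Real.log n ^ 2)) := by
        gcongr
        exacts [le_add_of_nonneg_right zero_le_one, one_div_two_pow_sq_le_exp (by positivity) hn]
    _ = _ := by ring

/-- super-polynomial convergence `e(n,s,S_{s,u}) ≤ c₅·exp(-c₆·(log n)²)`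
for the space of smooth functions `S_{s,u}`. -/
theorem statement3 (s : ℕ) (hs : 0 < s) (u : ℕ → ℝ) (hu : ∀ j, 0 < u j) (hmono : Antitone u) :
    ∃ c₅ c₆ : ℝ, 0 < c₅ ∧ 0 < c₆ ∧
      ∀ n : ℕ, 0 < n →
        minErr n s {f | MemS (fun j : Fin s => u j) f} (normS (fun j : Fin s => u j)) ≤
          ENNReal.ofReal (c₅ * Real.exp (-c₆ * (Real.log n) ^ 2)) :=
  statement3_general fun j => hu j

end
end

section
/- Let b ≥ 2 be an integer, s ∈ ℕ, and let a = (a_j)_{j≥1} be a nondecreasing sequence of real weights. Let 𝒜 be a finite subset of ℕ₀^s. Then for every n < |𝒜| one has e(n, s, W_{s,a}) ≥ ( max_{k, k* ∈ 𝒜} b^{μ_a(k ⊖ k*)} )^{−1}, where ⊖ denotes digitwise subtraction modulo b applied componentwise to the b-adic digits. -/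
open MeasureTheory Matrix Filter
open scoped ENNReal BigOperators Topology

noncomputable section

/-!
For algorithms sampling at `t₁, …, tₙ`, a function `f` of norm at most one which vanishes at every
`tᵢ` cannot be told apart from `-f`, so the error is at least `∫ f`. Such an `f` comes from linear
algebra: since `n < |𝒜|`, some nontrivial combination `∑ c_k wal_k`, `k ∈ 𝒜`, vanishes at all `tᵢ`,
and it can be scaled so that its largest coefficient is `c_m = 1`. Multiplying by the conjugate of
`wal_m` turns `wal_k` into `wal_{k ⊖ m}` and moves the coefficient `1` to `wal_0`. Thus the real
part `f` has integral `1`, its spectrum lies in `± (𝒜 ⊖ m)`, and dividing by the maximum of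
`b ^ μ_a (k ⊖ k')` normalises it. Everything else is the orthonormality of the Walsh functions.
-/

section Digits

variable {b : ℕ}

@[simp]
lemma natDigit_zero_left (b i : ℕ) : natDigit b 0 i = 0 := by simp [natDigit]

lemma natDigit_lt [NeZero b] (k i : ℕ) : natDigit b k i < b :=
  Nat.mod_lt _ (NeZero.pos b)

lemma natDigit_eq_zero_of_lt_pow {k i : ℕ} (h : k < b ^ i) : natDigit b k i = 0 := by
  rw [natDigit, Nat.div_eq_of_lt h, Nat.zero_mod]

lemma cast_natDigit_eq_zero_iff [NeZero b] {k i : ℕ} :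
    (natDigit b k i : ZMod b) = 0 ↔ natDigit b k i = 0 := by
  rw [ZMod.natCast_eq_zero_iff]
  exact ⟨fun h => Nat.eq_zero_of_dvd_of_lt h (natDigit_lt k i), fun h => h ▸ dvd_zero b⟩

lemma natDigit_sum_mul_pow {N : ℕ} {d : ℕ → ℕ} (hd : ∀ i, d i < b) {j : ℕ} (hj : j < N) :
    natDigit b (∑ i ∈ Finset.range N, d i * b ^ i) j = d j := by
  have digits_ofDigits := congrFun
    (finFunctionFinEquiv.symm_apply_apply fun i : Fin N => (⟨d i, hd i⟩ : Fin b)) ⟨j, hj⟩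
  rw [Finset.sum_range]
  exact congrArg Fin.val digits_ofDigits

lemma sum_mul_pow_lt_pow {N : ℕ} {d : ℕ → ℕ} (hd : ∀ i, d i < b) :
    ∑ i ∈ Finset.range N, d i * b ^ i < b ^ N := by
  rw [Finset.sum_range]
  exact (finFunctionFinEquiv fun i : Fin N => (⟨d i, hd i⟩ : Fin b)).isLt

variable [b.AtLeastTwo]

lemma lt_base_pow_of_le {k i : ℕ} (h : k ≤ i) : k < b ^ i :=
  h.trans_lt (Nat.lt_pow_self Nat.AtLeastTwo.one_lt)

lemma natDigit_eq_zero_of_le {k i : ℕ} (h : k ≤ i) : natDigit b k i = 0 :=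
  natDigit_eq_zero_of_lt_pow (lt_base_pow_of_le h)

lemma eq_of_natDigit_eq {k l : ℕ} (h : ∀ i, natDigit b k i = natDigit b l i) : k = l := by
  have hk : k < b ^ (k + l) := lt_base_pow_of_le (Nat.le_add_right k l)
  have hl : l < b ^ (k + l) := lt_base_pow_of_le (Nat.le_add_left l k)
  have same_digits : finFunctionFinEquiv.symm ⟨k, hk⟩ = finFunctionFinEquiv.symm ⟨l, hl⟩ :=
    funext fun i => Fin.ext (h i)
  exact congrArg Fin.val (finFunctionFinEquiv.symm.injective same_digits)

lemma eq_of_cast_natDigit_eq {k l : ℕ}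
    (h : ∀ i, (natDigit b k i : ZMod b) = natDigit b l i) : k = l :=
  eq_of_natDigit_eq (b := b) fun i =>
    (CharP.natCast_injOn_Iio (ZMod b) b) (natDigit_lt k i) (natDigit_lt l i) (h i)

lemma exists_natDigit_ne_zero {k : ℕ} (hk : k ≠ 0) : ∃ i, natDigit b k i ≠ 0 := by
  contrapose! hk
  exact eq_of_natDigit_eq (b := b) fun i => by rw [hk i, natDigit_zero_left]

lemma sum_range_natDigit_of_le {M : Type*} [AddCommMonoid M] {F : ℕ → ℕ → M}
    (hF : ∀ i, F i 0 = 0) {k N : ℕ} (hN : k ≤ N) :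
    ∑ i ∈ Finset.range k, F i (natDigit b k i) = ∑ i ∈ Finset.range N, F i (natDigit b k i) := by
  refine Finset.sum_subset (Finset.range_subset_range.2 hN) fun i _ hi => ?_
  rw [natDigit_eq_zero_of_le (by simpa using hi), hF]

end Digits

section DigitwiseSubtraction

/-- Digitwise subtraction modulo `b` of vectors, `k ⊖ k'`, taken componentwise; the digitwise
negative `⊖ k` is `dsubV b 0 k`. -/
def dsubV (b : ℕ) {s : ℕ} (k k' : Fin s → ℕ) : Fin s → ℕ := fun j => dsub b (k j) (k' j)

variable {b : ℕ} [b.AtLeastTwo]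

@[simp]
lemma cast_natDigit_dsub (k l i : ℕ) :
    (natDigit b (dsub b k l) i : ZMod b) = natDigit b k i - natDigit b l i := by
  have digit_lt : ∀ i, (natDigit b k i + (b - natDigit b l i)) % b < b :=
    fun i => Nat.mod_lt _ (NeZero.pos b)
  rcases lt_or_ge i (k + l + 1) with hi | hi
  · rw [dsub, natDigit_sum_mul_pow digit_lt hi, ZMod.natCast_mod, Nat.cast_add,
      Nat.cast_sub (natDigit_lt l i).le, ZMod.natCast_self, zero_sub, sub_eq_add_neg]
  · have dsub_lt : dsub b k l < b ^ i := (sum_mul_pow_lt_pow digit_lt).trans_le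
      (Nat.pow_le_pow_right (NeZero.pos b) hi)
    rw [natDigit_eq_zero_of_lt_pow dsub_lt, natDigit_eq_zero_of_le (by lia : k ≤ i),
      natDigit_eq_zero_of_le (by lia : l ≤ i), Nat.cast_zero, sub_zero]

lemma dsub_self (k : ℕ) : dsub b k k = 0 :=
  eq_of_cast_natDigit_eq (b := b) fun i => by simp

lemma dsub_zero_dsub_zero (k : ℕ) : dsub b 0 (dsub b 0 k) = k :=
  eq_of_cast_natDigit_eq (b := b) fun i => by simp

lemma dsub_left_injective (m : ℕ) : Function.Injective fun k => dsub b k m := by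
  intro k l (h : dsub b k m = dsub b l m)
  refine eq_of_cast_natDigit_eq (b := b) fun i => ?_
  have cast_eq := congrArg (fun q => (natDigit b q i : ZMod b)) h
  simpa only [cast_natDigit_dsub, sub_left_inj] using cast_eq

lemma dickWt_dsub_zero (a : ℝ) (k : ℕ) : dickWt b a (dsub b 0 k) = dickWt b a k := by
  have digit_eq_zero_iff (i : ℕ) : natDigit b (dsub b 0 k) i = 0 ↔ natDigit b k i = 0 := by
    rw [← cast_natDigit_eq_zero_iff, ← cast_natDigit_eq_zero_iff]
    simp
  have hF (i : ℕ) : (if 0 ≠ 0 then (i : ℝ) + 1 + a else 0) = 0 := by simp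
  unfold dickWt
  rw [sum_range_natDigit_of_le (F := fun i d => if d ≠ 0 then (i : ℝ) + 1 + a else 0) hF
      (Nat.le_add_right (dsub b 0 k) k),
    sum_range_natDigit_of_le (F := fun i d => if d ≠ 0 then (i : ℝ) + 1 + a else 0) hF
      (Nat.le_add_left k (dsub b 0 k))]
  simp only [ne_eq, digit_eq_zero_iff]

variable {s : ℕ}

@[simp]
lemma dsubV_self (k : Fin s → ℕ) : dsubV b k k = 0 :=
  funext fun j => dsub_self (k j)

lemma dsubV_zero_involutive : Function.Involutive (dsubV b (0 : Fin s → ℕ)) :=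
  fun k => funext fun j => dsub_zero_dsub_zero (k j)

lemma dsubV_left_injective (m : Fin s → ℕ) : Function.Injective fun k => dsubV b k m :=
  fun _ _ h => funext fun j => dsub_left_injective (m j) (congrFun h j)

lemma dsubV_eq_zero_iff {k l : Fin s → ℕ} : dsubV b k l = 0 ↔ k = l := by
  rw [← dsubV_self (b := b) l]
  exact (dsubV_left_injective l).eq_iff

lemma dickWtV_dsubV_zero (a : Fin s → ℝ) (k : Fin s → ℕ) :
    dickWtV b a (dsubV b 0 k) = dickWtV b a k :=
  Finset.sum_congr rfl fun j _ => dickWt_dsub_zero (a j) (k j)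

end DigitwiseSubtraction

section RealDigits

variable {b : ℕ}

lemma measurable_realDigit (i : ℕ) : Measurable fun x => realDigit b x i := by
  have measurable_floor : Measurable fun x : ℝ => ⌊x * (b : ℝ) ^ (i + 1)⌋ :=
    Int.measurable_floor.comp (measurable_id.mul_const _)
  exact (measurable_from_top (f := fun z : ℤ => (z % (b : ℤ)).toNat)).comp measurable_floor

variable [NeZero b]

lemma cast_realDigit (x : ℝ) (i : ℕ) :
    (realDigit b x i : ZMod b) = (⌊x * (b : ℝ) ^ (i + 1)⌋ : ZMod b) := by
  have emod_nonneg : 0 ≤ ⌊x * (b : ℝ) ^ (i + 1)⌋ % (b : ℤ) :=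
    Int.emod_nonneg _ (Int.natCast_ne_zero.2 (NeZero.ne b))
  rw [realDigit, ← Int.cast_natCast, Int.toNat_of_nonneg emod_nonneg, ZMod.intCast_mod]

/- Carries out of the digit of weight `b ^ (-j)` reach only the digits excluded by `hj`. -/
lemma cast_realDigit_add_inv_pow (x : ℝ) {i j : ℕ} (hj : j ≤ i + 1) :
    (realDigit b (x + ((b : ℝ) ^ j)⁻¹) i : ZMod b) =
      realDigit b x i + if i + 1 = j then 1 else 0 := by
  obtain ⟨m, hm⟩ := Nat.exists_eq_add_of_le hj
  have hb : (b : ℝ) ^ j ≠ 0 := pow_ne_zero j (NeZero.ne (b : ℝ))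
  have shift_mul_pow : (x + ((b : ℝ) ^ j)⁻¹) * (b : ℝ) ^ (i + 1) =
      x * (b : ℝ) ^ (i + 1) + (b ^ m : ℕ) := by
    rw [add_mul, hm, pow_add, inv_mul_cancel_left₀ hb, Nat.cast_pow]
  rw [cast_realDigit, cast_realDigit, shift_mul_pow, Int.floor_add_natCast]
  rcases Nat.eq_zero_or_pos m with rfl | hm_pos
  · simp [hm]
  · simp [hm, hm_pos.ne']

end RealDigits

section WalshOneDim

/-- The exponent `κ₁ξ₁ + κ₂ξ₂ + ⋯` of the Walsh function `wal_k (x)` as an element of `ZMod b`, so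
that `wal_k (x)` is the standard additive character of `ZMod b` at `walPhase b k x`. -/
def walPhase (b k : ℕ) (x : ℝ) : ZMod b :=
  ∑ i ∈ Finset.range k, (natDigit b k i : ZMod b) * realDigit b x i

@[simp]
lemma wal1_zero (b : ℕ) (x : ℝ) : wal1 b 0 x = 1 := by simp [wal1]

lemma measurable_wal1 (b k : ℕ) : Measurable (wal1 b k) := by
  have measurable_exponent :
      Measurable fun x : ℝ => ∑ i ∈ Finset.range k, natDigit b k i * realDigit b x i :=
    Finset.measurable_sum _ fun i _ => (measurable_realDigit i).const_mul _
  exact (measurable_from_top (f := fun m : ℕ =>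
    Complex.exp (2 * Real.pi * Complex.I / (b : ℂ) * (m : ℂ)))).comp measurable_exponent

lemma wal1_eq_stdAddChar {b : ℕ} [NeZero b] (k : ℕ) (x : ℝ) :
    wal1 b k x = ZMod.stdAddChar (walPhase b k x) := by
  have phase_eq_intCast : walPhase b k x =
      ((∑ i ∈ Finset.range k, natDigit b k i * realDigit b x i : ℕ) : ℤ) := by
    simp [walPhase]
  rw [phase_eq_intCast, ZMod.stdAddChar_coe, wal1, Int.cast_natCast, div_mul_eq_mul_div]

lemma norm_wal1 {b : ℕ} [NeZero b] (k : ℕ) (x : ℝ) : ‖wal1 b k x‖ = 1 := by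
  rw [wal1_eq_stdAddChar]
  exact AddChar.norm_apply _ _

lemma wal1_periodic {b : ℕ} [NeZero b] (k : ℕ) : Function.Periodic (wal1 b k) 1 := by
  intro x
  have digit_eq (i : ℕ) : (realDigit b (x + 1) i : ZMod b) = realDigit b x i := by
    simpa using cast_realDigit_add_inv_pow (b := b) x (Nat.zero_le (i + 1))
  simp only [wal1_eq_stdAddChar, walPhase, digit_eq]

variable {b : ℕ} [b.AtLeastTwo]

lemma walPhase_eq_sum_range (x : ℝ) {k N : ℕ} (hN : k ≤ N) :
    walPhase b k x = ∑ i ∈ Finset.range N, (natDigit b k i : ZMod b) * realDigit b x i :=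
  sum_range_natDigit_of_le (F := fun i d => (d : ZMod b) * realDigit b x i) (by simp) hN

lemma walPhase_dsub (k l : ℕ) (x : ℝ) :
    walPhase b (dsub b k l) x = walPhase b k x - walPhase b l x := by
  rw [walPhase_eq_sum_range x (by lia : dsub b k l ≤ k + l + dsub b k l),
    walPhase_eq_sum_range x (by lia : k ≤ k + l + dsub b k l),
    walPhase_eq_sum_range x (by lia : l ≤ k + l + dsub b k l), ← Finset.sum_sub_distrib]
  simp only [cast_natDigit_dsub, sub_mul]

lemma wal1_dsub (k l : ℕ) (x : ℝ) :
    wal1 b (dsub b k l) x = wal1 b k x * (starRingEnd ℂ) (wal1 b l x) := by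
  simp only [wal1_eq_stdAddChar, walPhase_dsub]
  rw [sub_eq_add_neg, AddChar.map_add_eq_mul, AddChar.map_neg_eq_conj]

lemma walPhase_add_inv_pow {k r : ℕ} (hr : ∀ i < r, natDigit b k i = 0) (x : ℝ) :
    walPhase b k (x + ((b : ℝ) ^ (r + 1))⁻¹) = walPhase b k x + natDigit b k r := by
  have term_eq (i : ℕ) :
      (natDigit b k i : ZMod b) * realDigit b (x + ((b : ℝ) ^ (r + 1))⁻¹) i =
        natDigit b k i * realDigit b x i + if i = r then (natDigit b k i : ZMod b) else 0 := by
    rcases lt_or_ge i r with hi | hi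
    · simp [hr i hi]
    · simp [cast_realDigit_add_inv_pow x (Nat.succ_le_succ hi), mul_add]
  have hN : k ≤ k + r + 1 := by lia
  simp only [walPhase_eq_sum_range _ hN, term_eq, Finset.sum_add_distrib]
  simp [show r < k + r + 1 by lia]

lemma wal1_add_inv_pow {k r : ℕ} (hr : ∀ i < r, natDigit b k i = 0) (x : ℝ) :
    wal1 b k (x + ((b : ℝ) ^ (r + 1))⁻¹) =
      ZMod.stdAddChar (natDigit b k r : ZMod b) * wal1 b k x := by
  rw [wal1_eq_stdAddChar, wal1_eq_stdAddChar, walPhase_add_inv_pow hr, AddChar.map_add_eq_mul,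
    mul_comm]

lemma intervalIntegral_eq_zero_of_periodic_of_add_eq_smul {𝕜 E : Type*} [NormedDivisionRing 𝕜]
    [NormedAddCommGroup E] [NormedSpace ℝ E] [Module 𝕜 E] [NormSMulClass 𝕜 E] [SMulCommClass ℝ 𝕜 E]
    {f : ℝ → E} {T t : ℝ} {c : 𝕜} (hf : Function.Periodic f T) (hc : c ≠ 1)
    (hft : ∀ x, f (x + t) = c • f x) (u : ℝ) : ∫ x in u..u + T, f x = 0 := by
  have integral_eq_smul : ∫ x in u..u + T, f x = c • ∫ x in u..u + T, f x := calc
    ∫ x in u..u + T, f x = ∫ x in (u + t)..(u + t) + T, f x := hf.intervalIntegral_add_eq _ _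
    _ = ∫ x in u..u + T, f (x + t) := by
      rw [intervalIntegral.integral_comp_add_right, add_right_comm]
    _ = c • ∫ x in u..u + T, f x := by simp only [hft, intervalIntegral.integral_smul]
  have sub_one_smul : (c - 1) • ∫ x in u..u + T, f x = 0 := by
    rw [sub_smul, one_smul, ← integral_eq_smul, sub_self]
  exact (smul_eq_zero.1 sub_one_smul).resolve_left (sub_ne_zero.2 hc)

lemma integral_wal1_of_ne_zero {k : ℕ} (hk : k ≠ 0) : ∫ x in Set.Ico (0 : ℝ) 1, wal1 b k x = 0 := by
  classical
  have exists_digit : ∃ i, natDigit b k i ≠ 0 := exists_natDigit_ne_zero hk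
  have lower_digits : ∀ i < Nat.find exists_digit, natDigit b k i = 0 :=
    fun i hi => not_not.1 (Nat.find_min exists_digit hi)
  have char_ne_one :
      ZMod.stdAddChar (natDigit b k (Nat.find exists_digit) : ZMod b) ≠ (1 : ℂ) := by
    rw [← AddChar.map_zero_eq_one (ZMod.stdAddChar (N := b)), ZMod.injective_stdAddChar.ne_iff,
      ne_eq, cast_natDigit_eq_zero_iff]
    exact Nat.find_spec exists_digit
  rw [integral_Ico_eq_integral_Ioc, ← intervalIntegral.integral_of_le zero_le_one]
  simpa only [zero_add] using intervalIntegral_eq_zero_of_periodic_of_add_eq_smul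
    (wal1_periodic k) char_ne_one (wal1_add_inv_pow lower_digits) 0

lemma integral_wal1 (k : ℕ) :
    ∫ x in Set.Ico (0 : ℝ) 1, wal1 b k x = if k = 0 then 1 else 0 := by
  split_ifs with hk
  · simp [hk]
  · exact integral_wal1_of_ne_zero hk

end WalshOneDim

section WalshOrthonormality

variable {b s : ℕ}

@[simp]
lemma wal_zero (x : Fin s → ℝ) : wal b 0 x = 1 := by simp [wal]

lemma integrable_wal [NeZero b] (k : Fin s → ℕ) :
    Integrable (wal b k) (volume.restrict (unitCube s)) := by
  unfold unitCube wal
  rw [volume_pi, Measure.restrict_pi_pi]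
  refine Integrable.fintype_prod_dep (f := fun j => wal1 b (k j)) fun j => ?_
  exact Integrable.of_bound (measurable_wal1 b (k j)).aestronglyMeasurable 1
    (Eventually.of_forall fun x => (norm_wal1 _ x).le)

variable [b.AtLeastTwo]

lemma wal_dsubV (k l : Fin s → ℕ) (x : Fin s → ℝ) :
    wal b (dsubV b k l) x = wal b k x * (starRingEnd ℂ) (wal b l x) := by
  simp only [wal, dsubV, wal1_dsub, Finset.prod_mul_distrib, map_prod]

lemma wal_dsubV_zero (k : Fin s → ℕ) (x : Fin s → ℝ) :
    wal b (dsubV b 0 k) x = (starRingEnd ℂ) (wal b k x) := by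
  rw [wal_dsubV, wal_zero, one_mul]

lemma integral_wal (k : Fin s → ℕ) :
    ∫ x in unitCube s, wal b k x = if k = 0 then 1 else 0 := by
  unfold unitCube wal
  rw [volume_pi, Measure.restrict_pi_pi,
    integral_fintype_prod_eq_prod (f := fun j => wal1 b (k j))]
  simp only [integral_wal1, Finset.prod_ite_zero, Finset.prod_const_one, Finset.mem_univ,
    forall_const, funext_iff, Pi.zero_apply]

lemma integral_wal_mul_conj_wal (k l : Fin s → ℕ) :
    ∫ x in unitCube s, wal b k x * (starRingEnd ℂ) (wal b l x) = if k = l then 1 else 0 := by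
  simp only [← wal_dsubV, integral_wal, dsubV_eq_zero_iff]

end WalshOrthonormality

section WalshPolynomials

variable {b s : ℕ}

/-- The Walsh polynomial `∑ₖ D(k) wal_k` with the finitely supported coefficients `D`. -/
def walshPoly (b : ℕ) {s : ℕ} (D : (Fin s → ℕ) →₀ ℂ) (x : Fin s → ℝ) : ℂ :=
  Finsupp.linearCombination ℂ (fun k => wal b k x) D

lemma walshPoly_eq_sum (D : (Fin s → ℕ) →₀ ℂ) (x : Fin s → ℝ) :
    walshPoly b D x = ∑ k ∈ D.support, D k * wal b k x := rfl

variable [b.AtLeastTwo]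

section

variable {f : (Fin s → ℝ) → ℝ} {E : (Fin s → ℕ) →₀ ℂ}

lemma walshCoeff_of_eq_walshPoly (hf : ∀ x, (f x : ℂ) = walshPoly b E x)
    (h : Fin s → ℕ) : walshCoeff b f h = E h := by
  have integrable_term (k : Fin s → ℕ) : Integrable
      (fun x => E k * (wal b k x * (starRingEnd ℂ) (wal b h x)))
      (volume.restrict (unitCube s)) := by
    simp only [← wal_dsubV]
    exact (integrable_wal _).const_mul _
  unfold walshCoeff
  simp only [hf, walshPoly_eq_sum, Finset.sum_mul, mul_assoc]
  rw [integral_finsetSum _ fun k _ => integrable_term k]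
  simp only [integral_const_mul, integral_wal_mul_conj_wal, mul_ite, mul_one, mul_zero,
    Finset.sum_ite_eq', Finsupp.mem_support_iff, ite_not]
  exact ite_eq_right_iff.2 Eq.symm

lemma intBox_of_eq_walshPoly (hf : ∀ x, (f x : ℂ) = walshPoly b E x) :
    intBox s f = (E 0).re := by
  rw [← walshCoeff_of_eq_walshPoly hf 0]
  simp [walshCoeff, intBox, integral_complex_ofReal]

lemma memW_of_eq_walshPoly {a : Fin s → ℝ} {B : ℝ}
    (hf : ∀ x, (f x : ℂ) = walshPoly b E x)
    (hE : ∀ k, ‖E k‖ * (b : ℝ) ^ dickWtV b a k ≤ B) : MemW b a f := by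
  refine ⟨fun x _ => ?_, B, ?_⟩
  · simp only [walshCoeff_of_eq_walshPoly hf, hf x, walshPoly_eq_sum]
    exact hasSum_sum_of_ne_finset_zero fun k hk => by
      rw [Finsupp.notMem_support_iff.1 hk, zero_mul]
  · rintro _ ⟨k, rfl⟩
    simpa only [walshCoeff_of_eq_walshPoly hf] using hE k

lemma normW_le_of_eq_walshPoly {a : Fin s → ℝ} {B : ℝ}
    (hf : ∀ x, (f x : ℂ) = walshPoly b E x)
    (hE : ∀ k, ‖E k‖ * (b : ℝ) ^ dickWtV b a k ≤ B) : normW b a f ≤ B :=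
  ciSup_le fun k => by simpa only [walshCoeff_of_eq_walshPoly hf] using hE k

end

/-- The coefficients `k ↦ conj D(⊖k)` of the complex conjugate of the Walsh polynomial with
coefficients `D`. -/
def conjCoeff (b : ℕ) [b.AtLeastTwo] {s : ℕ} (D : (Fin s → ℕ) →₀ ℂ) : (Fin s → ℕ) →₀ ℂ :=
  (D.mapRange (starRingEnd ℂ) (map_zero _)).equivMapDomain
    (dsubV_zero_involutive (b := b)).toPerm

/-- The coefficients of the real part of the Walsh polynomial with coefficients `D`. -/
def realPartCoeff (b : ℕ) [b.AtLeastTwo] {s : ℕ} (D : (Fin s → ℕ) →₀ ℂ) : (Fin s → ℕ) →₀ ℂ :=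
  (2⁻¹ : ℂ) • (D + conjCoeff b D)

lemma conj_walshPoly (D : (Fin s → ℕ) →₀ ℂ) (x : Fin s → ℝ) :
    (starRingEnd ℂ) (walshPoly b D x) = walshPoly b (conjCoeff b D) x := by
  rw [walshPoly_eq_sum, walshPoly, conjCoeff, Finsupp.linearCombination_equivMapDomain,
    Finsupp.linearCombination_apply, Finsupp.sum_mapRange_index (by simp), map_sum]
  exact Finset.sum_congr rfl fun k _ => by
    simp only [map_mul, Function.comp_apply, Function.Involutive.coe_toPerm, wal_dsubV_zero,
      smul_eq_mul]

lemma realPartCoeff_apply (D : (Fin s → ℕ) →₀ ℂ) (k : Fin s → ℕ) :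
    realPartCoeff b D k = 2⁻¹ * (D k + (starRingEnd ℂ) (D (dsubV b 0 k))) := by
  simp only [realPartCoeff, conjCoeff, Finsupp.smul_apply, Finsupp.add_apply,
    Finsupp.equivMapDomain_apply, Function.Involutive.toPerm_symm, Function.Involutive.coe_toPerm,
    Finsupp.mapRange_apply, smul_eq_mul]

lemma ofReal_re_walshPoly (D : (Fin s → ℕ) →₀ ℂ) (x : Fin s → ℝ) :
    ((walshPoly b D x).re : ℂ) = walshPoly b (realPartCoeff b D) x := by
  rw [Complex.re_eq_add_conj, conj_walshPoly, div_eq_inv_mul]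
  simp only [walshPoly, realPartCoeff, map_smul, map_add, smul_eq_mul]

lemma norm_realPartCoeff_mul_le {D : (Fin s → ℕ) →₀ ℂ} {a : Fin s → ℝ} {B : ℝ}
    (hD : ∀ k, ‖D k‖ * (b : ℝ) ^ dickWtV b a k ≤ B) (k : Fin s → ℕ) :
    ‖realPartCoeff b D k‖ * (b : ℝ) ^ dickWtV b a k ≤ B := by
  have bound_neg := hD (dsubV b 0 k)
  rw [dickWtV_dsubV_zero] at bound_neg
  calc ‖realPartCoeff b D k‖ * (b : ℝ) ^ dickWtV b a k
      ≤ 2⁻¹ * (‖D k‖ + ‖D (dsubV b 0 k)‖) * (b : ℝ) ^ dickWtV b a k := by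
        rw [realPartCoeff_apply, norm_mul, norm_inv, Complex.norm_ofNat]
        gcongr
        exact (norm_add_le _ _).trans_eq (by rw [RCLike.norm_conj])
    _ ≤ B := by linarith [hD k]

lemma re_realPartCoeff_zero (D : (Fin s → ℕ) →₀ ℂ) : (realPartCoeff b D 0).re = (D 0).re := by
  rw [realPartCoeff_apply, dsubV_self, Complex.add_conj, ← Complex.ofReal_ofNat,
    ← Complex.ofReal_inv, ← Complex.ofReal_mul, Complex.ofReal_re, inv_mul_cancel_left₀ two_ne_zero]

lemma walshPoly_mapDomain_dsubV (C : (Fin s → ℕ) →₀ ℂ) (m : Fin s → ℕ) (x : Fin s → ℝ) :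
    walshPoly b (C.mapDomain fun k => dsubV b k m) x =
      walshPoly b C x * (starRingEnd ℂ) (wal b m x) := by
  rw [walshPoly, Finsupp.linearCombination_mapDomain, Finsupp.linearCombination_apply, Finsupp.sum,
    walshPoly_eq_sum, Finset.sum_mul]
  exact Finset.sum_congr rfl fun k _ => by
    rw [Function.comp_apply, wal_dsubV, smul_eq_mul, mul_assoc]

end WalshPolynomials

section Fooling

lemma exists_normalized_linear_relation {𝕜 V ι : Type*} [NormedField 𝕜] [AddCommGroup V]
    [Module 𝕜 V] [Module.Finite 𝕜 V] (v : ι → V) {𝒜 : Finset ι}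
    (h𝒜 : Module.finrank 𝕜 V < 𝒜.card) :
    ∃ C : ι →₀ 𝕜, C.support ⊆ 𝒜 ∧ Finsupp.linearCombination 𝕜 v C = 0 ∧ (∀ k, ‖C k‖ ≤ 1) ∧
      ∃ m ∈ 𝒜, C m = 1 := by
  have dependent : ¬LinearIndepOn 𝕜 v (𝒜 : Set ι) := fun independent =>
    h𝒜.not_ge (by simpa using LinearIndependent.fintype_card_le_finrank independent)
  obtain ⟨c, c_supported, c_relation, c_ne_zero⟩ := linearDepOn_iff'.1 dependent
  obtain ⟨m, m_mem, m_max⟩ := c.support.exists_max_image (fun k => ‖c k‖)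
    (Finsupp.support_nonempty_iff.2 c_ne_zero)
  have cm_ne_zero : c m ≠ 0 := Finsupp.mem_support_iff.1 m_mem
  have c_le (k : ι) : ‖c k‖ ≤ ‖c m‖ := by
    by_cases hk : k ∈ c.support
    · exact m_max k hk
    · simp [Finsupp.notMem_support_iff.1 hk]
  have c_support : c.support ⊆ 𝒜 := Finset.coe_subset.1 c_supported
  refine ⟨(c m)⁻¹ • c, Finsupp.support_smul.trans c_support, ?_, fun k => ?_, m,
    c_support m_mem, inv_mul_cancel₀ cm_ne_zero⟩
  · rw [map_smul, c_relation, smul_zero]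
  · rw [Finsupp.smul_apply, smul_eq_mul, norm_mul, norm_inv,
      inv_mul_le_one₀ (norm_pos_iff.2 cm_ne_zero)]
    exact c_le k

lemma exists_walshPoly_vanishing {b s n : ℕ} {𝒜 : Finset (Fin s → ℕ)} (hn : n < 𝒜.card)
    (t : Fin n → Fin s → ℝ) :
    ∃ C : (Fin s → ℕ) →₀ ℂ, C.support ⊆ 𝒜 ∧ (∀ i, walshPoly b C (t i) = 0) ∧
      (∀ k, ‖C k‖ ≤ 1) ∧ ∃ m ∈ 𝒜, C m = 1 := by
  obtain ⟨C, C_support, C_relation, C_norm, C_one⟩ :=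
    exists_normalized_linear_relation (𝕜 := ℂ) (fun k i => wal b k (t i))
      ((Module.finrank_fin_fun ℂ).trans_lt hn)
  refine ⟨C, C_support, fun i => ?_, C_norm, C_one⟩
  have relation_at_i := congrArg (LinearMap.proj i : (Fin n → ℂ) →ₗ[ℂ] ℂ) C_relation
  rwa [Finsupp.apply_linearCombination, map_zero] at relation_at_i

variable {b s n : ℕ} [b.AtLeastTwo] {a : Fin s → ℝ} {𝒜 : Finset (Fin s → ℕ)} {M : ℝ}

lemma exists_walshPoly_vanishing_of_dickWtV_le (hn : n < 𝒜.card)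
    (hM : ∀ k ∈ 𝒜, ∀ k' ∈ 𝒜, (b : ℝ) ^ dickWtV b a (dsubV b k k') ≤ M) (t : Fin n → Fin s → ℝ) :
    ∃ D : (Fin s → ℕ) →₀ ℂ, (∀ p, ‖D p‖ * (b : ℝ) ^ dickWtV b a p ≤ 1) ∧
      (∀ i, walshPoly b D (t i) = 0) ∧ D 0 = (M⁻¹ : ℝ) := by
  classical
  obtain ⟨C, C_support, C_vanishes, C_norm, m, m_mem, Cm_eq_one⟩ :=
    exists_walshPoly_vanishing (b := b) hn t
  have M_pos : 0 < M := (Real.rpow_pos_of_pos (Nat.cast_pos.2 (NeZero.pos b)) _).trans_le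
    (hM m m_mem m m_mem)
  let D : (Fin s → ℕ) →₀ ℂ := ((M⁻¹ : ℝ) : ℂ) • C.mapDomain fun k => dsubV b k m
  have D_dsubV (k : Fin s → ℕ) : D (dsubV b k m) = (M⁻¹ : ℝ) * C k := by
    rw [Finsupp.smul_apply, Finsupp.mapDomain_apply (dsubV_left_injective m), smul_eq_mul]
  refine ⟨D, fun p => ?_, fun i => ?_, ?_⟩
  · by_cases hp : p ∈ D.support
    · obtain ⟨k, k_mem, rfl⟩ := Finset.mem_image.1
        (Finsupp.mapDomain_support (Finsupp.support_smul hp))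
      rw [D_dsubV, norm_mul, Complex.norm_real, Real.norm_of_nonneg (inv_pos.2 M_pos).le]
      calc M⁻¹ * ‖C k‖ * (b : ℝ) ^ dickWtV b a (dsubV b k m)
          ≤ M⁻¹ * 1 * M := by
            gcongr
            · exact C_norm k
            · exact hM k (C_support k_mem) m m_mem
        _ = 1 := by rw [mul_one, inv_mul_cancel₀ M_pos.ne']
    · simp [Finsupp.notMem_support_iff.1 hp]
  · rw [walshPoly, map_smul, ← walshPoly, walshPoly_mapDomain_dsubV, C_vanishes i, zero_mul,
      smul_zero]
  · rw [← dsubV_self (b := b) m, D_dsubV, Cm_eq_one, mul_one]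

lemma exists_fooling_function (hn : n < 𝒜.card)
    (hM : ∀ k ∈ 𝒜, ∀ k' ∈ 𝒜, (b : ℝ) ^ dickWtV b a (dsubV b k k') ≤ M) (t : Fin n → Fin s → ℝ) :
    ∃ f, MemW b a f ∧ normW b a f ≤ 1 ∧ (∀ i, f (t i) = 0) ∧ intBox s f = M⁻¹ := by
  obtain ⟨D, D_norm, D_vanishes, D_zero⟩ :=
    exists_walshPoly_vanishing_of_dickWtV_le hn hM t
  have re_eq := ofReal_re_walshPoly (b := b) D
  have coeff_norm := norm_realPartCoeff_mul_le D_norm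
  refine ⟨fun x => (walshPoly b D x).re, memW_of_eq_walshPoly re_eq coeff_norm,
    normW_le_of_eq_walshPoly re_eq coeff_norm, fun i => ?_, ?_⟩
  · exact (congrArg Complex.re (D_vanishes i)).trans Complex.zero_re
  · rw [intBox_of_eq_walshPoly re_eq, re_realPartCoeff_zero, D_zero, Complex.ofReal_re]

end Fooling

section LowerBound

lemma ofReal_abs_le_worstErr {s : ℕ} {H : Set ((Fin s → ℝ) → ℝ)} {N : ((Fin s → ℝ) → ℝ) → ℝ}
    (A : ((Fin s → ℝ) → ℝ) → ℝ) {f : (Fin s → ℝ) → ℝ} (hf : f ∈ H) (hN : N f ≤ 1) :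
    ENNReal.ofReal |intBox s f - A f| ≤ worstErr s H N A :=
  le_iSup₂_of_le f hf (le_iSup_of_le hN le_rfl)

lemma ofReal_le_minErr_of_fooling {n s : ℕ} {H : Set ((Fin s → ℝ) → ℝ)}
    {N : ((Fin s → ℝ) → ℝ) → ℝ} {ε : ℝ} (hH : ∀ f ∈ H, -f ∈ H) (hN : ∀ f, N (-f) = N f)
    (hε : ∀ t : Fin n → Fin s → ℝ, (∀ i, t i ∈ unitCube s) →
      ∃ f ∈ H, N f ≤ 1 ∧ (∀ i, f (t i) = 0) ∧ ε ≤ intBox s f) :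
    ENNReal.ofReal ε ≤ minErr n s H N := by
  refine le_iInf fun t => le_iInf fun ht => le_iInf fun φ => ?_
  obtain ⟨f, f_mem, f_norm, f_vanishes, f_int⟩ := hε t ht
  have err_f := ofReal_abs_le_worstErr (fun g => φ fun i => g (t i)) f_mem f_norm
  have err_neg := ofReal_abs_le_worstErr (fun g => φ fun i => g (t i)) (hH f f_mem)
    ((hN f).trans_le f_norm)
  have intBox_neg : intBox s (-f) = -intBox s f := integral_neg f
  simp only [f_vanishes, Pi.neg_apply, neg_zero, intBox_neg] at err_f err_neg
  rcases le_total (φ fun _ => 0) 0 with hφ | hφ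
  · exact (ENNReal.ofReal_le_ofReal (by linarith [le_abs_self (intBox s f - φ fun _ => 0)])).trans
      err_f
  · exact (ENNReal.ofReal_le_ofReal (by linarith [neg_le_abs (-intBox s f - φ fun _ => 0)])).trans
      err_neg

variable {b s : ℕ}

@[simp]
lemma walshCoeff_neg (f : (Fin s → ℝ) → ℝ) (k : Fin s → ℕ) :
    walshCoeff b (-f) k = -walshCoeff b f k := by
  simp [walshCoeff, integral_neg]

lemma MemW.neg {a : Fin s → ℝ} {f : (Fin s → ℝ) → ℝ} (hf : MemW b a f) : MemW b a (-f) :=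
  ⟨fun x hx => by simpa using (hf.1 x hx).neg, by simpa using hf.2⟩

lemma normW_neg (a : Fin s → ℝ) (f : (Fin s → ℝ) → ℝ) : normW b a (-f) = normW b a f := by
  simp [normW]

end LowerBound

theorem statement5_general {b : ℕ} (hb : 2 ≤ b) {s : ℕ} (a : Fin s → ℝ)
    (𝒜 : Finset (Fin s → ℕ)) (h𝒜 : 𝒜.Nonempty) {n : ℕ} (hn : n < 𝒜.card) :
    ENNReal.ofReal
        ((𝒜.sup' h𝒜 fun k => 𝒜.sup' h𝒜 fun k' => (b : ℝ) ^ dickWtV b a (dsubV b k k'))⁻¹) ≤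
      minErr n s {f | MemW b a f} (normW b a) := by
  have : b.AtLeastTwo := ⟨hb⟩
  set M := 𝒜.sup' h𝒜 fun k => 𝒜.sup' h𝒜 fun k' => (b : ℝ) ^ dickWtV b a (dsubV b k k')
  have le_M : ∀ k ∈ 𝒜, ∀ k' ∈ 𝒜, (b : ℝ) ^ dickWtV b a (dsubV b k k') ≤ M := fun k hk k' hk' =>
    Finset.le_sup'_of_le _ hk (Finset.le_sup'_of_le _ hk' le_rfl)
  refine ofReal_le_minErr_of_fooling (fun _ hf => hf.neg) (normW_neg a) fun t _ => ?_
  obtain ⟨f, f_mem, f_norm, f_vanishes, f_int⟩ := exists_fooling_function hn le_M t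
  exact ⟨f, f_mem, f_norm, f_vanishes, f_int.ge⟩

/-- for a finite set `𝒜 ⊆ ℕ₀^s` and `n < |𝒜|`,
`e(n, s, W_{s,a}) ≥ (max_{k,k* ∈ 𝒜} b^{μ_a(k ⊖ k*)})⁻¹`. -/
theorem statement5 (b : ℕ) (hb : 2 ≤ b) (s : ℕ) (hs : 0 < s) (a : ℕ → ℝ) (ha : Monotone a)
    (𝒜 : Finset (Fin s → ℕ)) (h𝒜 : 𝒜.Nonempty) (n : ℕ) (hn : n < 𝒜.card) :
    ENNReal.ofReal
        ((𝒜.sup' h𝒜 fun k => 𝒜.sup' h𝒜 fun k' =>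
          (b : ℝ) ^ dickWtV b (fun j : Fin s => a j) (fun j => dsub b (k j) (k' j)))⁻¹) ≤
      minErr n s {f | MemW b (fun j : Fin s => a j) f} (normW b (fun j : Fin s => a j)) :=
  statement5_general hb (fun j => a j) 𝒜 h𝒜 hn

end
end
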